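/- arXiv:1308.5081 — 2 statements merged into one kernel-verified Lean document; each statement's English description precedes it below -/
import Mathlib

section
/- Let f ∈ C(𝕋) and h > 0. Then (2/5)·K₂(f, h/(4√6)) ≤ W₂*(f, χ_h) ≤ 4·K₂(f, h/(4√6)). -/
/-!
Write `A_v f(t)` for the mean of `f` over `[t - v, t + v]`, so that `f * χ_u = A_{u/2} f`, and let
`F' = f`, `P' = F`.

*Upper estimate.* For `g ∈ C²` Taylor expansion gives `|g - A_v g| ≤ (v²/6) ‖g''‖`
(`abs_sub_mean_le`), while `A_v` is a contraction. Hence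
`‖f - f * χ_u‖ ≤ 2 ‖f - g‖ + (u²/24) ‖g''‖`, and `h²/24 = 4 (h / (4√6))²`.

*Lower estimate.* Let `W = W₂*(f, χ_h)`, `a = h/4` and `g = A_{a/2} A_{a/2} f`, that is
`g(t) = (P(t+a) - 2 P(t) + P(t-a)) / a²`. Its kernel, a tent supported on `[-a, a]`, is a convex
combination of the kernels `χ_u` with `u ≤ 2a`, so `‖f - g‖ ≤ W` (`abs_tent_sub_le`). Moreover
`g'' = Δ²_a f / a²`, where `Δ²_a f(t) = f(t+a) - 2 f(t) + f(t-a)`. Since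
`Δ²_a (A_a f) = 2 (A_{2a} f - A_a f)` is at most `4W` in norm and `Δ²_a (f - A_a f)` is at most
`4W`, one gets `‖Δ²_a f‖ ≤ 8W` (`abs_second_diff_le`). Altogether
`K₂(f, h / (4√6)) ≤ W + (h²/96) (16/h²) 8W = (7/3) W ≤ (5/2) W`.
-/

open MeasureTheory Real

/-- Uniform (sup) norm of a real function. -/
noncomputable def unorm (f : ℝ → ℝ) : ℝ := ⨆ u : ℝ, |f u|

/-- Convolution of two real functions. -/
noncomputable def conv (f g : ℝ → ℝ) : ℝ → ℝ := fun t => ∫ u : ℝ, f u * g (t - u)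

/-- Normalized characteristic function of `(-h/2, h/2)`. -/
noncomputable def chi (h : ℝ) : ℝ → ℝ := fun t => if -h/2 < t ∧ t < h/2 then 1/h else 0

/-- Convolution powers `χ_h^k` (defined for `k ≥ 1`; junk value `0` at `k = 0`). -/
noncomputable def chiPow (h : ℝ) : ℕ → (ℝ → ℝ)
  | 0 => fun _ => 0
  | 1 => chi h
  | (k+2) => conv (chiPow h (k+1)) (chi h)

/-- Special modulus of continuity `W₂(f, χ_h^k) = ‖f - f*χ_h^k‖`. -/
noncomputable def W2 (f : ℝ → ℝ) (h : ℝ) (k : ℕ) : ℝ :=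
  unorm (fun t => f t - conv f (chiPow h k) t)

/-- `W₂*(f, χ_h^k) = sup_{0 < u ≤ h} W₂(f, χ_u^k)`. -/
noncomputable def W2star (f : ℝ → ℝ) (h : ℝ) (k : ℕ) : ℝ :=
  ⨆ u : Set.Ioc (0:ℝ) h, W2 f u.1 k

/-- Second Peetre K-functional: infimum over twice continuously differentiable
1-periodic functions `g` of `‖f - g‖ + h² ‖D²g‖`. -/
noncomputable def K2 (f : ℝ → ℝ) (h : ℝ) : ℝ :=
  ⨅ g : {g : ℝ → ℝ // ContDiff ℝ 2 g ∧ Function.Periodic g 1},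
    unorm (fun t => f t - g.1 t) + h^2 * unorm (iteratedDeriv 2 g.1)

/-- Generalized K-functional `K̃₂(f, h₁, h₂)`. -/
noncomputable def Ktilde2 (f : ℝ → ℝ) (h1 h2 : ℝ) : ℝ :=
  ⨅ p : {p : (ℝ → ℝ) × (ℝ → ℝ) //
      (ContDiff ℝ 1 p.1 ∧ Function.Periodic p.1 1) ∧
      (ContDiff ℝ 2 p.2 ∧ Function.Periodic p.2 1)},
    unorm (fun t => f t - p.1.1 t) + h1 * unorm (deriv (fun t => p.1.1 t - p.1.2 t))
      + h2^2 * unorm (iteratedDeriv 2 p.1.2)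

/-- Classical second modulus of smoothness. -/
noncomputable def omega2 (f : ℝ → ℝ) (h : ℝ) : ℝ :=
  ⨆ u : Set.Ioc (0:ℝ) h, ⨆ t : ℝ, |f (t + u.1) - 2 * f t + f (t - u.1)|

/-- `τ` is a real 1-periodic trigonometric polynomial of degree at most `n - 1`. -/
def IsTrigPolyDegLT (n : ℕ) (τ : ℝ → ℝ) : Prop :=
  ∃ a b : ℕ → ℝ, ∀ t : ℝ, τ t =
    ∑ j ∈ Finset.range n, (a j * Real.cos (2 * Real.pi * j * t) + b j * Real.sin (2 * Real.pi * j * t))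

/-- Best approximation `E_{n-1}(f)` by trigonometric polynomials of degree at most `n-1`. -/
noncomputable def bestApprox (n : ℕ) (f : ℝ → ℝ) : ℝ :=
  ⨅ τ : {τ : ℝ → ℝ // IsTrigPolyDegLT n τ}, unorm (fun t => f t - τ.1 t)

/-! ### Sup norm and means -/

lemma unorm_nonneg (f : ℝ → ℝ) : 0 ≤ unorm f := Real.iSup_nonneg fun _ => abs_nonneg _

lemma unorm_le {f : ℝ → ℝ} {M : ℝ} (h : ∀ t, |f t| ≤ M) : unorm f ≤ M := ciSup_le h

lemma le_unorm_of_bound {f : ℝ → ℝ} {M : ℝ} (h : ∀ t, |f t| ≤ M) (t : ℝ) : |f t| ≤ unorm f :=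
  le_ciSup (f := fun u => |f u|) ⟨M, by rintro _ ⟨s, rfl⟩; exact h s⟩ t

lemma le_unorm {f : ℝ → ℝ} (hf : Continuous f) (hp : Function.Periodic f 1) (t : ℝ) :
    |f t| ≤ unorm f := by
  obtain ⟨M, hM⟩ := isCompact_Icc.exists_bound_of_continuousOn (s := Set.Icc (0 : ℝ) 1)
    hf.continuousOn
  refine le_unorm_of_bound (M := M) (fun s => ?_) t
  obtain ⟨y, hy, hys⟩ := hp.exists_mem_Ico₀ one_pos s
  rw [hys]
  exact hM y ⟨hy.1, hy.2.le⟩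

/-- The mean of `f` over `[t - v, t + v]`, for `v > 0`; it equals `f * χ_{2v}` at `t`. -/
noncomputable def mean (f : ℝ → ℝ) (v t : ℝ) : ℝ := (∫ x in (t - v)..(t + v), f x) / (2 * v)

lemma conv_chi (f : ℝ → ℝ) {u : ℝ} (hu : 0 < u) (t : ℝ) :
    conv f (chiPow u 1) t = mean f (u / 2) t := by
  have h1 : (fun x => f x * chi u (t - x)) =
      (Set.Ioo (t - u / 2) (t + u / 2)).indicator (fun x => f x * (1 / u)) := by
    funext x
    by_cases hx : x ∈ Set.Ioo (t - u / 2) (t + u / 2)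
    · rw [Set.indicator_of_mem hx]
      have : -u / 2 < t - x ∧ t - x < u / 2 := ⟨by linarith [hx.2], by linarith [hx.1]⟩
      simp only [chi, if_pos this]
    · rw [Set.indicator_of_notMem hx]
      have : ¬ (-u / 2 < t - x ∧ t - x < u / 2) :=
        fun h => hx ⟨by linarith [h.2], by linarith [h.1]⟩
      simp only [chi, if_neg this, mul_zero]
  change ∫ x, f x * chi u (t - x) = _
  rw [h1, integral_indicator measurableSet_Ioo, integral_mul_const, mean,
    intervalIntegral.integral_of_le (by linarith), integral_Ioc_eq_integral_Ioo,
    mul_div_cancel₀ u two_ne_zero, mul_one_div]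

lemma W2_eq (f : ℝ → ℝ) {u : ℝ} (hu : 0 < u) :
    W2 f u 1 = unorm (fun t => f t - mean f (u / 2) t) := by
  simp only [W2, conv_chi f hu]

lemma abs_mean_le {f : ℝ → ℝ} {M : ℝ} (h : ∀ t, |f t| ≤ M) {v : ℝ} (hv : 0 < v) (t : ℝ) :
    |mean f v t| ≤ M := by
  have h1 := intervalIntegral.norm_integral_le_of_norm_le_const
    (a := t - v) (b := t + v) (f := f) (C := M) (fun x _ => h x)
  rw [Real.norm_eq_abs, show t + v - (t - v) = 2 * v by ring,
    abs_of_pos (by linarith : 0 < 2 * v)] at h1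
  rw [mean, abs_div, abs_of_pos (by linarith : 0 < 2 * v), div_le_iff₀ (by linarith)]
  exact h1

lemma mean_sub {f g : ℝ → ℝ} (hf : Continuous f) (hg : Continuous g) (v t : ℝ) :
    mean (fun x => f x - g x) v t = mean f v t - mean g v t := by
  rw [mean, mean, mean, intervalIntegral.integral_sub (hf.intervalIntegrable _ _)
    (hg.intervalIntegrable _ _), sub_div]

/-- Integration of an inequality `|φ'(x)| ≤ c (n + 1) xⁿ` from `0`, where `φ 0 = 0`. -/
lemma abs_le_of_deriv {φ φ' : ℝ → ℝ} (hφ : ∀ x, HasDerivAt φ (φ' x) x) (h0 : φ 0 = 0)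
    (n : ℕ) (c v : ℝ) (hv : 0 ≤ v)
    (hb : ∀ x, 0 ≤ x → x ≤ v → |φ' x| ≤ c * ((n + 1 : ℕ) * x ^ n)) :
    |φ v| ≤ c * v ^ (n + 1) := by
  have hB : ∀ x : ℝ, HasDerivAt (fun x => c * x ^ (n + 1)) (c * ((n + 1 : ℕ) * x ^ n)) x :=
    fun x => by simpa using (hasDerivAt_pow (n + 1) x).const_mul c
  exact image_norm_le_of_norm_deriv_right_le_deriv_boundary (f := φ) (a := 0) (b := v)
    (fun x _ => (hφ x).continuousAt.continuousWithinAt)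
    (fun x _ => (hφ x).hasDerivWithinAt) (by simp [h0]) hB
    (fun x hx => hb x hx.1 hx.2.le) ⟨hv, le_rfl⟩

lemma hasDerivAt_add_arg {F : ℝ → ℝ} {f : ℝ → ℝ} (hF : ∀ x, HasDerivAt F (f x) x) (t x : ℝ) :
    HasDerivAt (fun x => F (t + x)) (f (t + x)) x := (hF (t + x)).comp_const_add t x

lemma hasDerivAt_sub_arg {F : ℝ → ℝ} {f : ℝ → ℝ} (hF : ∀ x, HasDerivAt F (f x) x) (t x : ℝ) :
    HasDerivAt (fun x => F (t - x)) (-f (t - x)) x := (hF (t - x)).comp_const_sub t x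

/-! ### Antiderivatives -/

lemma exists_antideriv {f : ℝ → ℝ} (hf : Continuous f) :
    ∃ F : ℝ → ℝ, ∀ x, HasDerivAt F (f x) x :=
  ⟨fun x => ∫ y in (0 : ℝ)..x, f y, fun x => hf.integral_hasStrictDerivAt 0 x |>.hasDerivAt⟩

lemma integral_eq {F f : ℝ → ℝ} (hf : Continuous f) (hF : ∀ x, HasDerivAt F (f x) x) (a b : ℝ) :
    ∫ x in a..b, f x = F b - F a :=
  intervalIntegral.integral_eq_sub_of_hasDerivAt (fun x _ => hF x) (hf.intervalIntegrable _ _)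

/-! ### Upper estimate -/

lemma abs_sub_mean_le {g : ℝ → ℝ} (hg : ContDiff ℝ 2 g) {M : ℝ}
    (hM : ∀ t, |iteratedDeriv 2 g t| ≤ M) {v : ℝ} (hv : 0 < v) (t : ℝ) :
    |g t - mean g v t| ≤ v ^ 2 / 6 * M := by
  obtain ⟨G, hG⟩ := exists_antideriv hg.continuous
  have hg1 : ∀ x, HasDerivAt g (deriv g x) x :=
    fun x => (hg.differentiable (by norm_num) x).hasDerivAt
  have hg2 : ∀ x, HasDerivAt (deriv g) (iteratedDeriv 2 g x) x := fun x => by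
    have : ContDiff ℝ 1 (deriv g) := ((contDiff_succ_iff_deriv (n := 1)).1 hg).2.2
    rw [iteratedDeriv_succ, iteratedDeriv_one]
    exact (this.differentiable (by norm_num) x).hasDerivAt
  -- Successive integration in `x` of the derivatives of `G (t + x) - G (t - x) - 2 x g(t)`.
  have e1 : ∀ x, 0 ≤ x → |deriv g (t + x) - deriv g (t - x)| ≤ 2 * M * x := fun x hx => by
    have := abs_le_of_deriv (φ := fun x => deriv g (t + x) - deriv g (t - x))
      (fun x => (hasDerivAt_add_arg hg2 t x).sub (hasDerivAt_sub_arg hg2 t x)) (by simp) 0 (2 * M)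
      x hx (fun y _ _ => by
        have h1 := abs_le.1 (hM (t + y))
        have h2 := abs_le.1 (hM (t - y))
        rw [abs_le]; constructor <;> norm_num <;> linarith)
    simpa using this
  have e2 : ∀ x, 0 ≤ x → |g (t + x) + g (t - x) - 2 * g t| ≤ M * x ^ 2 := fun x hx => by
    refine abs_le_of_deriv (φ := fun x => g (t + x) + g (t - x) - 2 * g t)
      (fun x => ((hasDerivAt_add_arg hg1 t x).add (hasDerivAt_sub_arg hg1 t x)).sub_const _)
      (by simp; ring) 1 M x hx (fun y hy _ => ?_)
    have := e1 y hy
    rw [← sub_eq_add_neg]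
    norm_num
    linarith
  have e3 : |G (t + v) - G (t - v) - v * (2 * g t)| ≤ M / 3 * v ^ 3 := by
    refine abs_le_of_deriv (φ := fun x => G (t + x) - G (t - x) - x * (2 * g t))
      (fun x => ((hasDerivAt_add_arg hG t x).sub (hasDerivAt_sub_arg hG t x)).sub
        ((hasDerivAt_id x).mul_const _))
      (by simp) 2 (M / 3) v hv.le (fun y hy _ => ?_)
    have := e2 y hy
    rw [sub_neg_eq_add, one_mul]
    norm_num
    linarith
  have e4 : g t - mean g v t = -(G (t + v) - G (t - v) - v * (2 * g t)) / (2 * v) := by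
    rw [mean, integral_eq hg.continuous hG]; field_simp; ring
  rw [e4, abs_div, abs_neg, abs_of_pos (by linarith : 0 < 2 * v), div_le_iff₀ (by linarith)]
  linarith

/-- Splitting `f = (f - g) + g`: the first part contributes at most `2 ‖f - g‖` because means are
contractions, the second is handled by Taylor expansion. -/
lemma W2_le {f g : ℝ → ℝ} (hf : Continuous f) (hper : Function.Periodic f 1)
    (hg : ContDiff ℝ 2 g) (hgp : Function.Periodic g 1) {u : ℝ} (hu : 0 < u) :
    W2 f u 1 ≤ 2 * unorm (fun t => f t - g t) + u ^ 2 / 24 * unorm (iteratedDeriv 2 g) := by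
  have hN := le_unorm (hf.sub hg.continuous) (hper.sub hgp)
  have hM : ∀ t, |iteratedDeriv 2 g t| ≤ unorm (iteratedDeriv 2 g) := by
    refine le_unorm (hg.continuous_iteratedDeriv 2 le_rfl) (fun t => ?_)
    have := congrFun (iteratedDeriv_comp_add_const 2 g 1) t
    rw [show (fun z => g (z + 1)) = g from funext hgp] at this
    exact this.symm
  rw [W2_eq f hu]
  refine unorm_le fun t => ?_
  have h1 := abs_le.1 (hN t)
  have h2 := abs_le.1 (abs_mean_le hN (half_pos hu) t)
  have h3 := abs_le.1 (abs_sub_mean_le hg hM (half_pos hu) t)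
  rw [show (f - g) = fun x => f x - g x from rfl, mean_sub hf hg.continuous] at h2
  simp only [Pi.sub_apply] at h1
  rw [show (f - g) = fun x => f x - g x from rfl] at h1
  rw [abs_le]; constructor <;> linarith

/-! ### Lower estimate -/

/-- The second difference of `f` is controlled by the distance from `f` to its means, through the
identity `Δ²_a (A_a f) = 2 (A_{2a} f - A_a f)`. -/
lemma abs_second_diff_le {f : ℝ → ℝ} (hf : Continuous f) {a W : ℝ} (ha : 0 < a)
    (hW : ∀ v, 0 < v → v ≤ 2 * a → ∀ t, |f t - mean f v t| ≤ W) (t : ℝ) :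
    |f (t + a) - 2 * f t + f (t - a)| ≤ 8 * W := by
  obtain ⟨F, hF⟩ := exists_antideriv hf
  have key : mean f a (t + a) - 2 * mean f a t + mean f a (t - a) =
      2 * (mean f (2 * a) t - mean f a t) := by
    simp only [mean, integral_eq hf hF]
    rw [show t + a - a = t by ring, show t - a + a = t by ring,
      show t + a + a = t + 2 * a by ring, show t - a - a = t - 2 * a by ring]
    field_simp
    ring
  have h1 := abs_le.1 (hW a ha (by linarith) (t + a))
  have h2 := abs_le.1 (hW a ha (by linarith) t)
  have h3 := abs_le.1 (hW a ha (by linarith) (t - a))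
  have h4 := abs_le.1 (hW (2 * a) (by linarith) le_rfl t)
  rw [abs_le]; constructor <;> linarith

/-- The left side is `a²` times the error of approximating `f` by its average against a tent on
`[-a, a]`. As a function of `a` it has derivative `2a (A_a f(t) - f(t))`, so the bound on the means
is inherited by the tent: a tent is a convex combination of the kernels `χ_u`. -/
lemma abs_tent_sub_le {f F P : ℝ → ℝ} (hf : Continuous f) (hF : ∀ x, HasDerivAt F (f x) x)
    (hP : ∀ x, HasDerivAt P (F x) x) {a W : ℝ} (ha : 0 < a)
    (hW : ∀ v, 0 < v → v ≤ 2 * a → ∀ t, |f t - mean f v t| ≤ W) (t : ℝ) :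
    |P (t + a) + P (t - a) - 2 * P t - f t * a ^ 2| ≤ W * a ^ 2 := by
  refine abs_le_of_deriv (φ := fun x => P (t + x) + P (t - x) - 2 * P t - f t * x ^ 2)
    (fun x => (((hasDerivAt_add_arg hP t x).add (hasDerivAt_sub_arg hP t x)).sub_const _).sub
      ((hasDerivAt_pow 2 x).const_mul (f t))) (by simp; ring) 1 W a ha.le (fun y hy hya => ?_)
  rcases hy.eq_or_lt with rfl | hy
  · simp
  have h1 := hW y hy (by linarith) t
  have h2 : f t - mean f y t = -(F (t + y) + -F (t - y) - f t * (2 * y)) / (2 * y) := by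
    rw [mean, integral_eq hf hF]; field_simp; ring
  rw [h2, abs_div, abs_neg, abs_of_pos (by linarith : 0 < 2 * y), div_le_iff₀ (by linarith)] at h1
  norm_num
  linarith

/-- `P` itself need not be periodic; its second difference is an integral of the increments
`F (t + x) - F (t - x)`, which are periodic in `t`. -/
lemma tent_periodic {f F P : ℝ → ℝ} (hf : Continuous f) (hper : Function.Periodic f 1)
    (hF : ∀ x, HasDerivAt F (f x) x) (hP : ∀ x, HasDerivAt P (F x) x) (a : ℝ) :
    Function.Periodic (fun t => P (t + a) + P (t - a) - 2 * P t) 1 := by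
  have hFc : Continuous F := continuous_iff_continuousAt.2 fun x => (hF x).continuousAt
  have rep : ∀ t, P (t + a) + P (t - a) - 2 * P t = ∫ x in (0 : ℝ)..a, (F (t + x) - F (t - x)) := by
    intro t
    rw [integral_eq (f := fun x => F (t + x) - F (t - x)) (F := fun x => P (t + x) + P (t - x))
      (by fun_prop) (fun x => ((hasDerivAt_add_arg hP t x).add
        (hasDerivAt_sub_arg hP t x)).congr_deriv (by ring))]
    simp; ring
  intro t
  simp only [rep]
  congr 1
  funext x
  rw [← integral_eq hf hF, ← integral_eq hf hF]
  have := intervalIntegral.integral_comp_add_right (a := t - x) (b := t + x) f 1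
  rw [show t + 1 - x = t - x + 1 by ring, show t + 1 + x = t + x + 1 by ring, ← this]
  exact intervalIntegral.integral_congr fun y _ => hper y

lemma K2_le {f g : ℝ → ℝ} (hg : ContDiff ℝ 2 g) (hgp : Function.Periodic g 1) (s : ℝ) :
    K2 f s ≤ unorm (fun t => f t - g t) + s ^ 2 * unorm (iteratedDeriv 2 g) :=
  ciInf_le (f := fun g : {g : ℝ → ℝ // ContDiff ℝ 2 g ∧ Function.Periodic g 1} =>
      unorm (fun t => f t - g.1 t) + s ^ 2 * unorm (iteratedDeriv 2 g.1))
    ⟨0, by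
      rintro _ ⟨g, rfl⟩
      exact add_nonneg (unorm_nonneg _) (mul_nonneg (sq_nonneg s) (unorm_nonneg _))⟩ ⟨g, hg, hgp⟩

/-- The competitor in `K₂` is the average of `f` against the tent on `[-a, a]`. -/
lemma K2_le_of_means {f : ℝ → ℝ} (hf : Continuous f) (hper : Function.Periodic f 1)
    {a W : ℝ} (ha : 0 < a) (hW : ∀ v, 0 < v → v ≤ 2 * a → ∀ t, |f t - mean f v t| ≤ W) (s : ℝ) :
    K2 f s ≤ W + s ^ 2 * (8 * W / a ^ 2) := by
  obtain ⟨F, hF⟩ := exists_antideriv hf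
  obtain ⟨P, hP⟩ := exists_antideriv (continuous_iff_continuousAt.2 fun x => (hF x).continuousAt)
  have ha2 : 0 < a ^ 2 := by positivity
  -- `tent P` is the competitor, with derivatives `tent F` and `tent f`.
  let tent : (ℝ → ℝ) → ℝ → ℝ := fun Q t => (Q (t + a) + Q (t - a) - 2 * Q t) / a ^ 2
  have htent : ∀ {Q q : ℝ → ℝ}, (∀ x, HasDerivAt Q (q x) x) →
      ∀ x, HasDerivAt (tent Q) (tent q x) x := fun {Q q} hQ x =>
    (((hQ (x + a)).comp_add_const x a |>.add ((hQ (x - a)).comp_sub_const x a)).sub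
      ((hQ x).const_mul 2)).div_const _
  have d1 : deriv (tent P) = tent F := funext fun x => (htent hP x).deriv
  have d2 : deriv (tent F) = tent f := funext fun x => (htent hF x).deriv
  have hD : iteratedDeriv 2 (tent P) = tent f := by
    rw [iteratedDeriv_succ, iteratedDeriv_one, d1, d2]
  have hC0 : Continuous (tent f) := by
    change Continuous fun t => (f (t + a) + f (t - a) - 2 * f t) / a ^ 2
    fun_prop
  have hC1 : ContDiff ℝ 1 (tent F) :=
    contDiff_one_iff_deriv.2 ⟨fun x => (htent hF x).differentiableAt, d2 ▸ hC0⟩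
  have hC2 : ContDiff ℝ 2 (tent P) :=
    (contDiff_succ_iff_deriv (n := 1)).2
      ⟨fun x => (htent hP x).differentiableAt, by simp, d1 ▸ hC1⟩
  have hp : Function.Periodic (tent P) 1 := fun t =>
    congrArg (· / a ^ 2) (tent_periodic hf hper hF hP a t)
  refine (K2_le hC2 hp s).trans (add_le_add (unorm_le fun t => ?_)
    (mul_le_mul_of_nonneg_left (unorm_le fun t => ?_) (sq_nonneg s)))
  · have h1 := abs_tent_sub_le hf hF hP ha hW t
    have h2 : f t - tent P t = -(P (t + a) + P (t - a) - 2 * P t - f t * a ^ 2) / a ^ 2 := by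
      simp only [tent]; field_simp; ring
    rw [h2, abs_div, abs_neg, abs_of_pos ha2, div_le_iff₀ ha2]
    exact h1
  · have h1 := abs_second_diff_le hf ha hW t
    rw [hD]
    simp only [tent]
    rw [abs_div, abs_of_pos ha2, div_le_div_iff_of_pos_right ha2,
      show f (t + a) + f (t - a) - 2 * f t = f (t + a) - 2 * f t + f (t - a) by ring]
    exact h1

/-- Corollary 3: `(2/5)·K₂(f, h/(4√6)) ≤ W₂*(f, χ_h) ≤ 4·K₂(f, h/(4√6))`. -/
theorem stmt6 (f : ℝ → ℝ) (hf : Continuous f) (hper : Function.Periodic f 1)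
    (h : ℝ) (hh : 0 < h) :
    (2/5) * K2 f (h / (4 * Real.sqrt 6)) ≤ W2star f h 1 ∧
    W2star f h 1 ≤ 4 * K2 f (h / (4 * Real.sqrt 6)) := by
  have hs : (h / (4 * Real.sqrt 6)) ^ 2 = h ^ 2 / 96 := by
    rw [div_pow, mul_pow, Real.sq_sqrt (by norm_num)]; norm_num
  have hfb := le_unorm hf hper
  have hmean : ∀ u, 0 < u → ∀ t, |f t - mean f (u / 2) t| ≤ 2 * unorm f := fun u hu t => by
    have h1 := abs_le.1 (hfb t)
    have h2 := abs_le.1 (abs_mean_le hfb (half_pos hu) t)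
    rw [abs_le]; constructor <;> linarith
  have hbdd : BddAbove (Set.range fun u : Set.Ioc (0:ℝ) h => W2 f u.1 1) :=
    ⟨2 * unorm f, by
      rintro _ ⟨u, rfl⟩
      simp only [W2_eq f u.2.1]
      exact unorm_le (hmean u.1 u.2.1)⟩
  constructor
  -- The radius `h / 4` gives the constant `1 + 4/3 = 7/3 ≤ 5/2`.
  · have hW : ∀ v, 0 < v → v ≤ 2 * (h / 4) → ∀ t, |f t - mean f v t| ≤ W2star f h 1 := by
      intro v hv hvh t
      have h1 : 0 < 2 * v := by linarith
      have h2 := le_ciSup hbdd ⟨2 * v, h1, by linarith⟩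
      rw [W2_eq f h1] at h2
      have h3 := (le_unorm_of_bound (hmean (2 * v) h1) t).trans h2
      rwa [mul_div_cancel_left₀ v two_ne_zero] at h3
    have hK := K2_le_of_means hf hper (by linarith) hW (h / (4 * Real.sqrt 6))
    have hW0 : 0 ≤ W2star f h 1 := (abs_nonneg _).trans (hW (h / 4) (by linarith) (by linarith) 0)
    have e : h ^ 2 / 96 * (8 * W2star f h 1 / (h / 4) ^ 2) = 4 / 3 * W2star f h 1 := by
      field_simp; ring
    rw [hs, e] at hK
    linarith
  · have : Nonempty {g : ℝ → ℝ // ContDiff ℝ 2 g ∧ Function.Periodic g 1} :=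
      ⟨⟨fun _ => 0, contDiff_const, fun _ => rfl⟩⟩
    have : Nonempty (Set.Ioc (0:ℝ) h) := ⟨⟨h, hh, le_rfl⟩⟩
    suffices W2star f h 1 / 4 ≤ K2 f (h / (4 * Real.sqrt 6)) by linarith
    refine le_ciInf fun g => ?_
    rw [hs, div_le_iff₀ (by norm_num)]
    refine ciSup_le fun u => (W2_le hf hper g.2.1 g.2.2 u.2.1).trans ?_
    have h1 : u.1 ^ 2 ≤ h ^ 2 := pow_le_pow_left₀ u.2.1.le u.2.2 2
    have h2 := mul_le_mul_of_nonneg_right h1 (unorm_nonneg (iteratedDeriv 2 g.1))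
    have h3 := unorm_nonneg (fun t => f t - g.1 t)
    linarith
end

section
/- For f ∈ C(𝕋) and h > 0, (2/3)·K₂(f, h/2) ≤ (1/2)·ω₂(f, h) ≤ 2·K₂(f, h/2). -/
/-!
The proof rests on the second order Taylor estimate `abs_le_of_second_deriv`: if `φ(0) = φ'(0) = 0`
and `|φ''| ≤ C` on `[0, h]`, then `|φ(h)| ≤ C h² / 2`.

*Upper bound.* For `g ∈ C²(𝕋)`, the second difference of `f` with step `u ≤ h` is that of `f - g`,
at most `4 ‖f - g‖`, plus that of `g`, at most `h² ‖D²g‖` by the Taylor estimate applied to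
`s ↦ g(t + s) - 2 g(t) + g(t - s)`. As `4 (‖f - g‖ + (h/2)² ‖D²g‖)` is exactly this sum, taking
the infimum over `g` gives `ω₂(f, h) ≤ 4 K₂(f, h/2)`.

*Lower bound.* The competitor is the second order Steklov mean `g = f * χ_h²`, written as
`g(t) = (F(t + h) - 2 F(t) + F(t - h)) / h²` with `F'' = f`. Then `D²g` is `h⁻²` times the second
difference of `f`, so `‖D²g‖ ≤ ω₂(f, h) / h²`. The Taylor estimate applied to
`s ↦ F(t + s) - 2 F(t) + F(t - s) - s² f(t)`, whose second derivative is the second difference of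
`f` with step `s`, gives `‖f - g‖ ≤ ω₂(f, h) / 2`. Hence
`K₂(f, h/2) ≤ (1/2 + 1/4) ω₂(f, h)`.
-/


open MeasureTheory Real

lemma periodic_bounded {f : ℝ → ℝ} (hf : Continuous f) (hper : Function.Periodic f 1) :
    ∃ M, ∀ x, |f x| ≤ M := by
  obtain ⟨M, hM⟩ := (hper.isBounded_of_continuous one_ne_zero hf).exists_norm_le
  exact ⟨M, fun x => hM _ ⟨x, rfl⟩⟩

lemma unorm_le_s9 {f : ℝ → ℝ} {C : ℝ} (hC : ∀ x, |f x| ≤ C) : unorm f ≤ C :=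
  ciSup_le hC

lemma abs_le_unorm {f : ℝ → ℝ} (hf : Continuous f) (hper : Function.Periodic f 1) (x : ℝ) :
    |f x| ≤ unorm f := by
  obtain ⟨M, hM⟩ := periodic_bounded hf hper
  exact le_ciSup (f := fun x => |f x|) ⟨M, by rintro _ ⟨y, rfl⟩; exact hM y⟩ x

lemma abs_second_diff_le_s9 {f : ℝ → ℝ} {M : ℝ} (hM : ∀ x, |f x| ≤ M) (t u : ℝ) :
    |f (t + u) - 2 * f t + f (t - u)| ≤ 4 * M := by
  have h1 := abs_le.1 (hM (t + u))
  have h2 := abs_le.1 (hM t)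
  have h3 := abs_le.1 (hM (t - u))
  rw [abs_le]
  constructor <;> linarith

lemma abs_second_diff_le_omega2 {f : ℝ → ℝ} (hf : Continuous f) (hper : Function.Periodic f 1)
    {h u : ℝ} (hu : 0 < u) (huh : u ≤ h) (t : ℝ) :
    |f (t + u) - 2 * f t + f (t - u)| ≤ omega2 f h := by
  obtain ⟨M, hM⟩ := periodic_bounded hf hper
  refine (le_ciSup (f := fun t => |f (t + u) - 2 * f t + f (t - u)|)
    ⟨4 * M, ?_⟩ t).trans ?_
  · rintro _ ⟨y, rfl⟩
    exact abs_second_diff_le_s9 hM y u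
  · refine le_ciSup (f := fun u : Set.Ioc (0:ℝ) h =>
      ⨆ t : ℝ, |f (t + u.1) - 2 * f t + f (t - u.1)|) ⟨4 * M, ?_⟩ ⟨u, hu, huh⟩
    rintro _ ⟨v, rfl⟩
    exact ciSup_le fun t => abs_second_diff_le_s9 hM t v.1

/-- If `φ(0) = φ'(0) = 0` and `|φ''| ≤ C` on `[0, h]`, then `|φ(h)| ≤ C h² / 2`. -/
lemma abs_le_of_second_deriv {φ φ' φ'' : ℝ → ℝ} {C h : ℝ} (hh : 0 ≤ h)
    (h1 : ∀ s, HasDerivAt φ (φ' s) s) (h2 : ∀ s, HasDerivAt φ' (φ'' s) s)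
    (h0 : φ 0 = 0) (h0' : φ' 0 = 0) (hC : ∀ s, 0 ≤ s → s ≤ h → |φ'' s| ≤ C) :
    |φ h| ≤ C * h ^ 2 / 2 := by
  have key1 : ∀ s ∈ Set.Icc (0:ℝ) h, ‖φ' s‖ ≤ C * s := by
    refine image_norm_le_of_norm_deriv_right_le_deriv_boundary
      (f' := φ'') (B' := fun _ => C)
      (fun s _ => (h2 s).continuousAt.continuousWithinAt)
      (fun s _ => (h2 s).hasDerivWithinAt) (by simp [h0'])
      (fun s => ?_) (fun s hs => hC s hs.1 hs.2.le)
    simpa using (hasDerivAt_id s).const_mul C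
  have key2 : ∀ s ∈ Set.Icc (0:ℝ) h, ‖φ s‖ ≤ C * s ^ 2 / 2 := by
    refine image_norm_le_of_norm_deriv_right_le_deriv_boundary
      (f' := φ') (B' := fun s => C * s)
      (fun s _ => (h1 s).continuousAt.continuousWithinAt)
      (fun s _ => (h1 s).hasDerivWithinAt) (by simp [h0])
      (fun s => ?_) (fun s hs => key1 s ⟨hs.1, hs.2.le⟩)
    refine HasDerivAt.congr_deriv (((hasDerivAt_pow 2 s).const_mul C).div_const 2) ?_
    norm_num
    ring
  exact key2 h ⟨hh, le_rfl⟩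

/-- For `g ∈ C²(𝕋)`, second differences with step `u` are at most `u² ‖D²g‖`. -/
lemma second_diff_smooth {g : ℝ → ℝ} (hg : ContDiff ℝ 2 g) (hper : Function.Periodic g 1)
    {u : ℝ} (hu : 0 ≤ u) (t : ℝ) :
    |g (t + u) - 2 * g t + g (t - u)| ≤ u ^ 2 * unorm (iteratedDeriv 2 g) := by
  have e : iteratedDeriv 2 g = deriv (deriv g) := by
    rw [iteratedDeriv_succ, iteratedDeriv_one]
  have hg1 : ∀ x, HasDerivAt g (deriv g x) x := fun x =>
    (hg.differentiable (by norm_num) x).hasDerivAt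
  have hd : ContDiff ℝ 1 (deriv g) := (contDiff_succ_iff_deriv (n := 1).1 hg).2.2
  have hg2 : ∀ x, HasDerivAt (deriv g) (deriv (deriv g) x) x := fun x =>
    (hd.differentiable (by norm_num) x).hasDerivAt
  have hc : Continuous (deriv (deriv g)) := hd.continuous_deriv le_rfl
  have pd : ∀ {k : ℝ → ℝ}, Function.Periodic k 1 → Function.Periodic (deriv k) 1 := by
    intro k hk x
    rw [← deriv_comp_add_const, funext hk]
  have hb := abs_le_unorm hc (pd (pd hper))
  rw [e]
  have hp : ∀ s, HasDerivAt (fun s => t + s) 1 s := fun s => (hasDerivAt_id s).const_add t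
  have hm : ∀ s, HasDerivAt (fun s => t - s) (-1) s := fun s => (hasDerivAt_id s).const_sub t
  have := abs_le_of_second_deriv (φ := fun s => g (t + s) - 2 * g t + g (t - s))
    (φ' := fun s => deriv g (t + s) - deriv g (t - s))
    (φ'' := fun s => deriv (deriv g) (t + s) + deriv (deriv g) (t - s))
    (C := 2 * unorm (deriv (deriv g))) hu
    (fun s => by
      refine HasDerivAt.congr_deriv ((((hg1 (t + s)).comp s (hp s)).sub_const (2 * g t)).add
        ((hg1 (t - s)).comp s (hm s))) ?_
      ring)
    (fun s => by
      refine HasDerivAt.congr_deriv (((hg2 (t + s)).comp s (hp s)).sub ((hg2 (t - s)).comp s (hm s))) ?_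
      ring)
    (by simp; ring) (by simp)
    (fun s _ _ => (abs_add_le _ _).trans (by linarith [hb (t + s), hb (t - s)]))
  linarith

lemma omega2_le {f : ℝ → ℝ} (hf : Continuous f) (hper : Function.Periodic f 1)
    {h : ℝ} (hh : 0 < h) : omega2 f h ≤ 4 * K2 f (h / 2) := by
  have : Nonempty {g : ℝ → ℝ // ContDiff ℝ 2 g ∧ Function.Periodic g 1} :=
    ⟨⟨fun _ => 0, contDiff_const, fun _ => rfl⟩⟩
  have : Nonempty (Set.Ioc (0:ℝ) h) := ⟨⟨h, hh, le_rfl⟩⟩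
  suffices omega2 f h / 4 ≤ K2 f (h / 2) by linarith
  refine le_ciInf ?_
  rintro ⟨g, hg, hgp⟩
  suffices omega2 f h ≤ 4 * unorm (fun t => f t - g t) + h ^ 2 * unorm (iteratedDeriv 2 g) by
    simp only
    linarith
  refine ciSup_le ?_
  rintro ⟨u, hu, huh⟩
  refine ciSup_le fun t => ?_
  have h1 := abs_second_diff_le_s9
    (abs_le_unorm (f := fun t => f t - g t) (hf.sub hg.continuous) (hper.sub hgp)) t u
  have h2 := second_diff_smooth hg hgp hu.le t
  have h3 : u ^ 2 * unorm (iteratedDeriv 2 g) ≤ h ^ 2 * unorm (iteratedDeriv 2 g) := by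
    have := unorm_nonneg (iteratedDeriv 2 g)
    gcongr
  calc |f (t + u) - 2 * f t + f (t - u)|
      = |(f (t + u) - g (t + u) - 2 * (f t - g t) + (f (t - u) - g (t - u)))
        + (g (t + u) - 2 * g t + g (t - u))| := by congr 1; ring
    _ ≤ _ := abs_add_le _ _
    _ ≤ _ := by linarith

/-- The competitor is the second order Steklov mean with step `h`: its distance to `f` contributes
`1/2` and its second derivative `1/4` to the constant. -/
lemma K2_le_s9 {f : ℝ → ℝ} (hf : Continuous f) (hper : Function.Periodic f 1)
    {h : ℝ} (hh : 0 < h) : K2 f (h / 2) ≤ 3 / 4 * omega2 f h := by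
  set G : ℝ → ℝ := fun x => ∫ s in (0:ℝ)..x, f s with hG
  have hG1 : ∀ x, HasDerivAt G (f x) x := fun x =>
    intervalIntegral.integral_hasDerivAt_right (hf.intervalIntegrable _ _)
      (hf.stronglyMeasurableAtFilter _ _) hf.continuousAt
  have hGc : Continuous G := continuous_iff_continuousAt.2 fun x => (hG1 x).continuousAt
  set F : ℝ → ℝ := fun x => ∫ s in (0:ℝ)..x, G s with hF
  have hF1 : ∀ x, HasDerivAt F (G x) x := fun x =>
    intervalIntegral.integral_hasDerivAt_right (hGc.intervalIntegrable _ _)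
      (hGc.stronglyMeasurableAtFilter _ _) hGc.continuousAt
  have hGper : ∀ x, G (x + 1) - G x = G 1 := by
    intro x
    have h1 := hper.intervalIntegral_add_eq x 0
    rw [zero_add] at h1
    change (∫ s in (0:ℝ)..(x + 1), f s) - (∫ s in (0:ℝ)..x, f s) = ∫ s in (0:ℝ)..1, f s
    rw [← h1]
    exact intervalIntegral.integral_interval_sub_left (hf.intervalIntegrable _ _)
      (hf.intervalIntegrable _ _)
  -- `F (x + 1) - F x` is affine, so its second differences vanish.
  have hFper : ∀ x, F (x + 1) - F x = G 1 * x + F 1 := by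
    have hd : ∀ x, HasDerivAt (fun x => F (x + 1) - F x - G 1 * x) 0 x := by
      intro x
      refine HasDerivAt.congr_deriv ((((hF1 (x + 1)).comp_add_const x 1).sub (hF1 x)).sub
        ((hasDerivAt_id x).const_mul (G 1))) ?_
      rw [hGper]
      ring
    intro x
    have := is_const_of_deriv_eq_zero (fun x => (hd x).differentiableAt)
      (fun x => (hd x).deriv) x 0
    have hF0 : F 0 = 0 := by simp [hF]
    simp only [zero_add, mul_zero, sub_zero, hF0] at this
    linarith
  set g : ℝ → ℝ := fun t => (F (t + h) - 2 * F t + F (t - h)) / h ^ 2 with hg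
  set g1 : ℝ → ℝ := fun t => (G (t + h) - 2 * G t + G (t - h)) / h ^ 2 with hg1
  set g2 : ℝ → ℝ := fun t => (f (t + h) - 2 * f t + f (t - h)) / h ^ 2 with hg2
  have hgd : ∀ t, HasDerivAt g (g1 t) t := fun t =>
    ((((hF1 (t + h)).comp_add_const t h).sub ((hF1 t).const_mul 2)).add
      ((hF1 (t - h)).comp_sub_const t h)).div_const _
  have hgd2 : ∀ t, HasDerivAt g1 (g2 t) t := fun t =>
    ((((hG1 (t + h)).comp_add_const t h).sub ((hG1 t).const_mul 2)).add
      ((hG1 (t - h)).comp_sub_const t h)).div_const _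
  have eg : deriv g = g1 := funext fun t => (hgd t).deriv
  have eg1 : deriv g1 = g2 := funext fun t => (hgd2 t).deriv
  have hg2c : Continuous g2 := by fun_prop
  have hgC : ContDiff ℝ 2 g := by
    have hc1 : ContDiff ℝ 1 g1 :=
      contDiff_one_iff_deriv.2 ⟨fun t => (hgd2 t).differentiableAt, by rwa [eg1]⟩
    refine contDiff_succ_iff_deriv (n := 1).2
      ⟨fun t => (hgd t).differentiableAt, by simp, by rwa [eg]⟩
  have hgp : Function.Periodic g 1 := by
    intro t
    have a := hFper t
    have b := hFper (t + h)
    have c := hFper (t - h)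
    rw [show t + h + 1 = t + 1 + h by ring] at b
    rw [show t - h + 1 = t + 1 - h by ring] at c
    simp only [hg]
    congr 1
    linarith
  have e2 : iteratedDeriv 2 g = g2 := by
    rw [iteratedDeriv_succ, iteratedDeriv_one, eg, eg1]
  have hh2 : 0 < h ^ 2 := by positivity
  have hω : 0 ≤ omega2 f h :=
    (abs_nonneg _).trans (abs_second_diff_le_omega2 hf hper hh le_rfl 0)
  have n2 : unorm g2 ≤ omega2 f h / h ^ 2 := unorm_le_s9 fun t => by
    simp only [hg2]
    rw [abs_div, abs_of_pos hh2]
    gcongr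
    exact abs_second_diff_le_omega2 hf hper hh le_rfl t
  have n1 : unorm (fun t => f t - g t) ≤ omega2 f h / 2 := unorm_le_s9 fun t => by
    have hp : ∀ s, HasDerivAt (fun s => t + s) 1 s := fun s => (hasDerivAt_id s).const_add t
    have hm : ∀ s, HasDerivAt (fun s => t - s) (-1) s := fun s => (hasDerivAt_id s).const_sub t
    have key := abs_le_of_second_deriv
      (φ := fun s => F (t + s) - 2 * F t + F (t - s) - f t * s ^ 2)
      (φ' := fun s => G (t + s) - G (t - s) - 2 * f t * s)
      (φ'' := fun s => f (t + s) - 2 * f t + f (t - s))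
      (C := omega2 f h) hh.le
      (fun s => by
        refine HasDerivAt.congr_deriv (((((hF1 (t + s)).comp s (hp s)).sub_const (2 * F t)).add
          ((hF1 (t - s)).comp s (hm s))).sub ((hasDerivAt_pow 2 s).const_mul (f t))) ?_
        norm_num
        ring)
      (fun s => by
        refine HasDerivAt.congr_deriv ((((hG1 (t + s)).comp s (hp s)).sub ((hG1 (t - s)).comp s (hm s))).sub
          ((hasDerivAt_id s).const_mul (2 * f t))) ?_
        ring)
      (by simp; ring) (by simp)
      (fun s hs hsh => by
        -- The step `0` is not among those in the supremum defining `omega2`.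
        rcases hs.eq_or_lt with rfl | hs
        · convert hω using 1
          simp
          ring
        · exact abs_second_diff_le_omega2 hf hper hs hsh t)
    have : f t - g t = -((F (t + h) - 2 * F t + F (t - h) - f t * h ^ 2) / h ^ 2) := by
      simp only [hg]
      field_simp
      ring
    simp only [this]
    rw [abs_neg, abs_div, abs_of_pos hh2, div_le_iff₀ hh2]
    linarith
  have hK : K2 f (h / 2) ≤ unorm (fun t => f t - g t) + (h / 2) ^ 2 * unorm (iteratedDeriv 2 g) := by
    refine ciInf_le (f := fun g : {g : ℝ → ℝ // ContDiff ℝ 2 g ∧ Function.Periodic g 1} =>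
      unorm (fun t => f t - g.1 t) + (h / 2) ^ 2 * unorm (iteratedDeriv 2 g.1)) ⟨0, ?_⟩
      ⟨g, hgC, hgp⟩
    rintro _ ⟨k, rfl⟩
    have a := unorm_nonneg (fun t => f t - k.1 t)
    have b := unorm_nonneg (iteratedDeriv 2 k.1)
    positivity
  rw [e2] at hK
  have : (h / 2) ^ 2 * unorm g2 ≤ omega2 f h / 4 := by
    calc (h / 2) ^ 2 * unorm g2 ≤ (h / 2) ^ 2 * (omega2 f h / h ^ 2) := by gcongr
      _ = omega2 f h / 4 := by field_simp; ring
  linarith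

/-- Lemma 2: `(2/3)·K₂(f, h/2) ≤ (1/2)·ω₂(f, h) ≤ 2·K₂(f, h/2)`. -/
theorem stmt9 (f : ℝ → ℝ) (hf : Continuous f) (hper : Function.Periodic f 1)
    (h : ℝ) (hh : 0 < h) :
    (2/3) * K2 f (h/2) ≤ (1/2) * omega2 f h ∧
    (1/2) * omega2 f h ≤ 2 * K2 f (h/2) := by
  have h1 := K2_le_s9 hf hper hh
  have h2 := omega2_le hf hper hh
  constructor <;> linarith
end
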